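/- Let X be a finite-dimensional real inner product space and let T : X → X be an averaged operator whose fixed point set {z : T(z) = z} is nonempty. Then for every initial point z¹ ∈ X, the sequence defined by z^{n+1} = T(z^n) converges to some fixed point z∘ of T. -/

import Mathlib

open RealInnerProductSpace

/-!
Write `T = (1 - c) • id + c • S`, and let `q` be a cluster point of the orbit of `z₁`, which is
bounded because `T` is nonexpansive and has a fixed point. The step lengths of this orbit decrease
to a limit, so by continuity the orbit of `q` moves by steps of constant length. In any normed
space, an orbit of a relaxed nonexpansive map with constant positive step length is unbounded (the
Edelstein–O'Brien argument), so `q` is fixed. The distances `dist (Tⁿ z₁) q` decrease and come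
arbitrarily close to `0`, hence `Tⁿ z₁` converges to `q`.
-/

open Bornology Filter Function Topology

section Iteration

variable {X : Type*}

theorem apply_iterate_eq_of_tendsto_of_mapClusterPt {Y : Type*} [TopologicalSpace X]
    [TopologicalSpace Y] [T2Space Y] {f : X → X} {g : X → Y} (hf : Continuous f)
    (hg : Continuous g) {x q : X} {y : Y} (hy : Tendsto (fun n => g (f^[n] x)) atTop (𝓝 y))
    (hq : MapClusterPt q atTop fun n => f^[n] x) (k : ℕ) : g (f^[k] q) = y := by
  have hcluster : MapClusterPt (g (f^[k] q)) atTop fun n => g (f^[k] (f^[n] x)) :=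
    hq.continuousAt_comp (f := g ∘ f^[k]) (hg.comp (hf.iterate k)).continuousAt
  have hlim : Tendsto (fun n => g (f^[k] (f^[n] x))) atTop (𝓝 y) := by
    simpa only [← iterate_add_apply, add_comm k, comp_def] using hy.comp (tendsto_add_atTop_nat k)
  exact eq_of_nhds_neBot (hcluster.clusterPt.mono hlim)

variable [PseudoMetricSpace X] {f : X → X} {x p q : X}

theorem dist_iterate_le_nat_mul {a : ℝ} (h : ∀ k, dist (f (f^[k] x)) (f^[k] x) ≤ a) (n : ℕ) :
    dist (f^[n] x) x ≤ n * a := by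
  have hsum : dist (f^[0] x) (f^[n] x) ≤ ∑ _i ∈ Finset.range n, a :=
    dist_le_range_sum_of_dist_le (f := fun k => f^[k] x) n fun {k} _ => by
      rw [dist_comm, iterate_succ_apply']
      exact h k
  simpa [dist_comm] using hsum

theorem antitone_dist_iterate_of_isFixedPt (hf : LipschitzWith 1 f) (hp : IsFixedPt f p) (x : X) :
    Antitone fun n => dist (f^[n] x) p :=
  antitone_nat_of_succ_le fun n => by
    simpa [iterate_succ_apply', hp.eq] using hf.dist_le_mul (f^[n] x) p

theorem antitone_dist_apply_iterate_self (hf : LipschitzWith 1 f) (x : X) :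
    Antitone fun n => dist (f (f^[n] x)) (f^[n] x) :=
  antitone_nat_of_succ_le fun n => by
    simpa [iterate_succ_apply'] using hf.dist_le_mul (f (f^[n] x)) (f^[n] x)

theorem isBounded_range_iterate_of_isFixedPt (hf : LipschitzWith 1 f) (hp : IsFixedPt f p) (x : X) :
    IsBounded (Set.range fun n => f^[n] x) :=
  Metric.isBounded_closedBall.subset (Set.range_subset_iff.mpr fun n =>
    Metric.mem_closedBall.mpr (antitone_dist_iterate_of_isFixedPt hf hp x n.zero_le))

theorem exists_mapClusterPt_of_isBounded_range {u : ℕ → X} [ProperSpace X]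
    (hu : IsBounded (Set.range u)) : ∃ q, MapClusterPt q atTop u := by
  obtain ⟨q, -, hq⟩ := hu.isCompact_closure.exists_mapClusterPt (f := atTop) (u := u)
    (tendsto_principal.mpr (.of_forall fun n => subset_closure (Set.mem_range_self n)))
  exact ⟨q, hq⟩

theorem exists_forall_dist_apply_iterate_eq_of_mapClusterPt (hf : LipschitzWith 1 f)
    (hq : MapClusterPt q atTop fun n => f^[n] x) :
    ∃ a, ∀ k, dist (f (f^[k] q)) (f^[k] q) = a :=
  ⟨_, apply_iterate_eq_of_tendsto_of_mapClusterPt hf.continuous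
    (hf.continuous.dist continuous_id)
    (tendsto_atTop_ciInf (antitone_dist_apply_iterate_self hf x)
      ⟨0, Set.forall_mem_range.mpr fun _ => dist_nonneg⟩) hq⟩

theorem tendsto_iterate_of_mapClusterPt_of_isFixedPt (hf : LipschitzWith 1 f)
    (hqf : IsFixedPt f q) (hq : MapClusterPt q atTop fun n => f^[n] x) :
    Tendsto (fun n => f^[n] x) atTop (𝓝 q) := by
  refine Metric.tendsto_atTop.mpr fun ε hε => ?_
  obtain ⟨N, hN⟩ := (hq.frequently (Metric.ball_mem_nhds q hε)).exists
  exact ⟨N, fun n hn => (antitone_dist_iterate_of_isFixedPt hf hqf x hn).trans_lt hN⟩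

end Iteration

/-- The relaxation `(1 - c) • id + c • S` of a self-map `S`, written with `AffineMap.lineMap`. For
`S` nonexpansive and `0 < c < 1` these are exactly the averaged operators. -/
noncomputable def relaxation {X : Type*} [AddCommGroup X] [Module ℝ X] (c : ℝ) (S : X → X)
    (z : X) : X :=
  AffineMap.lineMap z (S z) c

section Relaxation

variable {X : Type*} [NormedAddCommGroup X] [NormedSpace ℝ X] {c : ℝ} {S : X → X}

theorem dist_relaxation_self (hc : 0 ≤ c) (z : X) :
    dist (relaxation c S z) z = c * dist (S z) z := by
  rw [relaxation, dist_lineMap_left, Real.norm_of_nonneg hc, dist_comm z]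

theorem dist_relaxation_le (hc₀ : 0 ≤ c) (hc₁ : c ≤ 1) (z w : X) :
    dist (relaxation c S z) w ≤ (1 - c) * dist z w + c * dist (S z) w := by
  rw [relaxation, AffineMap.lineMap_apply_module]
  exact (convexOn_univ_dist w).2 (Set.mem_univ z) (Set.mem_univ (S z)) (sub_nonneg.mpr hc₁) hc₀
    (sub_add_cancel 1 c)

theorem lipschitzWith_relaxation (hS : LipschitzWith 1 S) (hc₀ : 0 ≤ c) (hc₁ : c ≤ 1) :
    LipschitzWith 1 (relaxation c S) := by
  refine LipschitzWith.of_dist_le_mul fun z w => ?_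
  have hSzw : dist (S z) (S w) ≤ dist z w := by simpa using hS.dist_le_mul z w
  calc dist (relaxation c S z) (relaxation c S w)
      ≤ dist ((1 - c) • z) ((1 - c) • w) + dist (c • S z) (c • S w) := by
        simpa only [relaxation, AffineMap.lineMap_apply_module] using dist_add_add_le _ _ _ _
    _ = (1 - c) * dist z w + c * dist (S z) (S w) := by
        rw [dist_smul₀, dist_smul₀, Real.norm_of_nonneg (sub_nonneg.mpr hc₁),
          Real.norm_of_nonneg hc₀]
    _ ≤ (1 - c) * dist z w + c * dist z w := by gcongr
    _ = (1 : NNReal) * dist z w := by rw [NNReal.coe_one]; ring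

theorem one_add_nat_mul_mul_le_dist_apply_iterate_relaxation (hS : LipschitzWith 1 S)
    (hc₀ : 0 ≤ c) (hc₁ : c < 1) {r : ℝ} {x : X}
    (hr : ∀ k, dist (S ((relaxation c S)^[k] x)) ((relaxation c S)^[k] x) = r) (n : ℕ) :
    (1 + n * c) * r ≤ dist (S ((relaxation c S)^[n] x)) x := by
  induction n generalizing x with
  | zero => simpa using (hr 0).ge
  | succ n ih =>
    set y := (relaxation c S)^[n + 1] x
    have hfrom_next : (1 + n * c) * r ≤ dist (S y) (relaxation c S x) :=
      ih fun k => hr (k + 1)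
    have htravel : dist y x ≤ (n + 1 : ℕ) * (c * r) :=
      dist_iterate_le_nat_mul (fun k => by rw [dist_relaxation_self hc₀, hr k]) (n + 1)
    have hS_travel : dist (S y) (S x) ≤ (n + 1 : ℕ) * (c * r) :=
      (by simpa using hS.dist_le_mul y x : dist (S y) (S x) ≤ dist y x).trans htravel
    have hconvex : dist (S y) (relaxation c S x) ≤
        (1 - c) * dist (S y) x + c * dist (S y) (S x) := by
      simpa only [dist_comm (S y)] using dist_relaxation_le hc₀ hc₁.le x (S y)
    refine le_of_mul_le_mul_left ?_ (sub_pos.mpr hc₁)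
    calc (1 - c) * ((1 + (n + 1 : ℕ) * c) * r)
        = (1 + n * c) * r - c * ((n + 1 : ℕ) * (c * r)) := by push_cast; ring
      _ ≤ (1 + n * c) * r - c * dist (S y) (S x) := by gcongr
      _ ≤ (1 - c) * dist (S y) x := by linarith

theorem isFixedPt_relaxation_of_forall_dist_eq (hS : LipschitzWith 1 S) (hc₀ : 0 < c)
    (hc₁ : c < 1) {x : X} {a : ℝ} (hx : IsBounded (Set.range fun n => (relaxation c S)^[n] x))
    (ha : ∀ k, dist (relaxation c S ((relaxation c S)^[k] x)) ((relaxation c S)^[k] x) = a) :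
    IsFixedPt (relaxation c S) x := by
  obtain ⟨C, hC⟩ := Metric.isBounded_range_iff.mp hx
  have hr (k : ℕ) : dist (S ((relaxation c S)^[k] x)) ((relaxation c S)^[k] x) = a / c := by
    rw [← ha k, dist_relaxation_self hc₀.le, mul_div_cancel_left₀ _ hc₀.ne']
  have hgrowth (n : ℕ) : n * a ≤ C :=
    calc n * a = (1 + n * c) * (a / c) - a / c := by field_simp; ring
      _ ≤ dist (S ((relaxation c S)^[n] x)) x - a / c := by
          gcongr
          exact one_add_nat_mul_mul_le_dist_apply_iterate_relaxation hS hc₀.le hc₁ hr n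
      _ ≤ dist ((relaxation c S)^[n] x) x := by
          rw [← hr n, sub_le_iff_le_add']
          exact dist_triangle _ _ _
      _ ≤ C := hC n 0
  have ha_nonpos : a ≤ 0 := by
    by_contra! ha_pos
    obtain ⟨n, hn⟩ := exists_lt_nsmul ha_pos C
    exact (hgrowth n).not_gt (by rwa [nsmul_eq_mul] at hn)
  exact dist_le_zero.mp ((ha 0).trans_le ha_nonpos)

end Relaxation

theorem stmt_10_general {X : Type*} [NormedAddCommGroup X] [NormedSpace ℝ X]
    [FiniteDimensional ℝ X]
    (T : X → X)
    (havg : ∃ lam : ℝ, 0 < lam ∧ lam < 1 ∧ ∃ S : X → X, LipschitzWith 1 S ∧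
      ∀ z, T z = (1 - lam) • z + lam • S z)
    (hfix : ∃ z, T z = z) (z₁ : X) :
    ∃ z₀ : X, T z₀ = z₀ ∧ Tendsto (fun n : ℕ => T^[n] z₁) atTop (𝓝 z₀) := by
  have : ProperSpace X := FiniteDimensional.proper_real X
  obtain ⟨c, hc₀, hc₁, S, hS, hT_eq⟩ := havg
  obtain rfl : T = relaxation c S :=
    funext fun z => (hT_eq z).trans (AffineMap.lineMap_apply_module z (S z) c).symm
  obtain ⟨p, hp⟩ := hfix
  have hT := lipschitzWith_relaxation hS hc₀.le hc₁.le
  obtain ⟨q, hq⟩ := exists_mapClusterPt_of_isBounded_range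
    (isBounded_range_iterate_of_isFixedPt hT hp z₁)
  obtain ⟨a, ha⟩ := exists_forall_dist_apply_iterate_eq_of_mapClusterPt hT hq
  have hqf := isFixedPt_relaxation_of_forall_dist_eq hS hc₀ hc₁
    (isBounded_range_iterate_of_isFixedPt hT hp q) ha
  exact ⟨q, hqf, tendsto_iterate_of_mapClusterPt_of_isFixedPt hT hqf hq⟩

/-- Krasnosel'skiĭ–Mann: in a finite-dimensional real inner product space, the fixed
point iteration of an averaged operator `T` (i.e. `T = (1 - λ) • Id + λ • S` with
`λ ∈ (0, 1)` and `S` nonexpansive) with a nonempty fixed point set converges, from any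
initial point, to a fixed point of `T`. -/
theorem stmt_10 {X : Type*} [NormedAddCommGroup X] [InnerProductSpace ℝ X]
    [FiniteDimensional ℝ X]
    (T : X → X)
    (havg : ∃ lam : ℝ, 0 < lam ∧ lam < 1 ∧ ∃ S : X → X, LipschitzWith 1 S ∧
      ∀ z, T z = (1 - lam) • z + lam • S z)
    (hfix : ∃ z, T z = z) (z₁ : X) :
    ∃ z₀ : X, T z₀ = z₀ ∧
      Filter.Tendsto (fun n : ℕ => T^[n] z₁) Filter.atTop (nhds z₀) :=
  stmt_10_general T havg hfix z₁
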